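/- arXiv:2310.13502 — 3 statements merged into one kernel-verified Lean document; each statement's English description precedes it below -/
import Mathlib

section
/- (Magic of potions, geometric form.) Let f = {a_i}_{i∈I} be a relevant family of homogeneous elements, closed under homogeneous divisors (f = f̲), of an M-graded commutative ring A, and let g = {b_j}_{j∈J} be a finite family of homogeneous elements of A. Let χ : A_{(f)} → A_{(f∪g)} be the canonical ring homomorphism between potions. Then the induced morphism of affine schemes Spec(A_{(f∪g)}) → Spec(A_{(f)}) (i.e., Spec.map applied to χ) is an open immersion. -/
/-!
Statement 8 (Magic of potions, geometric form): for `f` a relevant family of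
homogeneous elements, closed under homogeneous divisors, and `g` a finite family of
homogeneous elements, the morphism of affine schemes
`Spec (A_{(f∪g)}) → Spec (A_{(f)})` induced by the canonical ring homomorphism
`χ : A_{(f)} → A_{(f∪g)}` is an open immersion.
-/

open AlgebraicGeometry

/-- The set of degrees of homogeneous divisors of members of the family `f`. -/
def divisorDegrees {M A I : Type*} [AddCommGroup M] [CommRing A]
    (𝒜 : M → Submodule ℤ A) (f : I → A) : Set M :=
  {m | ∃ x : A, x ≠ 0 ∧ x ∈ 𝒜 m ∧ ∃ i, x ∣ f i}

/-- A family `f` of homogeneous elements of an `M`-graded ring is *relevant* if every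
`x ∈ M` has a positive multiple lying in the subgroup of `M` generated by the degrees
of the homogeneous divisors of members of `f`. -/
def IsRelevant {M A I : Type*} [AddCommGroup M] [CommRing A]
    (𝒜 : M → Submodule ℤ A) (f : I → A) : Prop :=
  ∀ x : M, ∃ n : ℕ, 0 < n ∧ n • x ∈ AddSubgroup.closure (divisorDegrees 𝒜 f)

/-- The canonical ring homomorphism between localizations of the same ring at two
nested submonoids `S ≤ T`. -/
noncomputable def locMap {A : Type*} [CommRing A] {S T : Submonoid A} (h : S ≤ T) :
    Localization S →+* Localization T :=
  IsLocalization.map (Localization T) (RingHom.id A)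
    (show S ≤ Submonoid.comap (RingHom.id A) T from h)

theorem degree_diff {M A : Type*} [AddCommGroup M] [DecidableEq M] [CommRing A]
    (𝒜 : M → Submodule ℤ A) [GradedRing 𝒜] (S : Submonoid A) (X : Set M)
    (hX : ∀ m ∈ X, ∃ x ∈ S, x ∈ 𝒜 m) :
    ∀ x ∈ AddSubgroup.closure X, ∃ s ∈ S, ∃ t ∈ S,
        ∃ ms mt, s ∈ 𝒜 ms ∧ t ∈ 𝒜 mt ∧ x = ms - mt := by
  intro x hx
  have h1 := SetLike.one_mem_graded 𝒜
  induction hx using AddSubgroup.closure_induction with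
  | mem x hx =>
    obtain ⟨s, hs, hsx⟩ := hX x hx
    exact ⟨s, hs, 1, one_mem _, x, 0, hsx, h1, by simp⟩
  | zero => exact ⟨1, one_mem _, 1, one_mem _, 0, 0, h1, h1, by simp⟩
  | add x y _ _ hx hy =>
    obtain ⟨s, hs, t, ht, a, b, ha, hb, e⟩ := hx
    obtain ⟨s', hs', t', ht', a', b', ha', hb', e'⟩ := hy
    exact ⟨s * s', mul_mem hs hs', t * t', mul_mem ht ht', _, _, SetLike.mul_mem_graded ha ha',
      SetLike.mul_mem_graded hb hb', by rw [e, e']; abel⟩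
  | neg x _ hx =>
    obtain ⟨s, hs, t, ht, a, b, ha, hb, e⟩ := hx
    exact ⟨t, ht, s, hs, b, a, hb, ha, by rw [e]; abel⟩

theorem locMap_mk {A : Type*} [CommRing A] {S T : Submonoid A} (h : S ≤ T) (a : A) (s : S) :
    locMap h (Localization.mk a s) = Localization.mk a ⟨s, h s.2⟩ := by
  rw [Localization.mk_eq_mk', Localization.mk_eq_mk', locMap, IsLocalization.map_mk']
  rfl

open HomogeneousLocalization in
theorem potion_aux {M : Type*} {A : Type} [AddCommGroup M] [DecidableEq M] [CommRing A]
    (𝒜 : M → Submodule ℤ A) [GradedRing 𝒜] {S T : Submonoid A} (hST : S ≤ T)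
    {χ : HomogeneousLocalization 𝒜 S →+* HomogeneousLocalization 𝒜 T}
    (hχ : ∀ w, (χ w).val = locMap hST w.val)
    {d : M} {W D : A} (hW : W ∈ 𝒜 d) (hD : D ∈ 𝒜 d) (hWT : W ∈ T) (hDS : D ∈ S)
    (hhom : ∀ s ∈ S, ∃ m, s ∈ 𝒜 m)
    (key : ∀ t ∈ T, ∃ c, ∃ N : ℕ, ∃ s ∈ S, (∃ m, c ∈ 𝒜 m) ∧ c * t = W ^ N * s) :
    IsOpenImmersion (Spec.map (CommRingCat.ofHom χ)) := by
  letI := χ.toAlgebra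
  have halg : ∀ x, algebraMap (HomogeneousLocalization 𝒜 S) (HomogeneousLocalization 𝒜 T) x
    = χ x := fun _ => rfl
  let w : HomogeneousLocalization 𝒜 S := mk ⟨d, ⟨W, hW⟩, ⟨D, hD⟩, hDS⟩
  suffices IsLocalization.Away w (HomogeneousLocalization 𝒜 T) from
    IsOpenImmersion.of_isLocalization w
  apply IsLocalization.Away.mk
  · rw [halg]
    refine IsUnit.of_mul_eq_one (mk ⟨d, ⟨D, hD⟩, ⟨W, hW⟩, hWT⟩) ?_
    apply val_injective
    rw [val_mul, hχ, val_mk, val_mk, locMap_mk, Localization.mk_mul, val_one,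
      ← Localization.mk_one, Localization.mk_eq_mk_iff, Localization.r_iff_exists]
    refine ⟨1, ?_⟩
    simp
    ring
  · intro z
    obtain ⟨⟨m, ⟨a, ha⟩, ⟨t, htm⟩, ht⟩, rfl⟩ := mk_surjective z
    obtain ⟨c, N, s, hs, ⟨mc, hc⟩, h⟩ := key t ht
    obtain ⟨ms, hsm⟩ := hhom s hs
    by_cases h0 : W ^ N * s = 0
    · have : (0 : A) ∈ T := h0 ▸ mul_mem (pow_mem hWT N) (hST hs)
      have := HomogeneousLocalization.subsingleton 𝒜 this
      exact ⟨0, 0, Subsingleton.elim _ _⟩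
    have e : mc + m = N • d + ms := by
      refine DirectSum.degree_eq_of_mem_mem 𝒜 (x := c * t) (SetLike.mul_mem_graded hc htm) ?_ ?_
      · rw [h]
        exact SetLike.mul_mem_graded (SetLike.pow_mem_graded N hW) hsm
      · rwa [h]
    refine ⟨N, mk ⟨N • d + ms, ⟨c * a, e ▸ SetLike.mul_mem_graded hc ha⟩,
      ⟨D ^ N * s, SetLike.mul_mem_graded (SetLike.pow_mem_graded N hD) hsm⟩,
      mul_mem (pow_mem hDS N) hs⟩, ?_⟩
    rw [halg, halg]
    apply val_injective
    rw [val_mul, val_pow, hχ, hχ, val_mk, val_mk, val_mk, locMap_mk, locMap_mk,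
      Localization.mk_pow, Localization.mk_mul, Localization.mk_eq_mk_iff,
      Localization.r_iff_exists]
    refine ⟨1, ?_⟩
    simp
    linear_combination (-a * D ^ N) * h
  · intro x y hxy
    rw [halg, halg, ← sub_eq_zero, ← map_sub] at hxy
    suffices ∀ u, χ u = 0 → ∃ n : ℕ, w ^ n * u = 0 by
      obtain ⟨n, hn⟩ := this _ hxy
      exact ⟨n, by rwa [mul_sub, sub_eq_zero] at hn⟩
    intro u hu
    obtain ⟨⟨m, ⟨a, ha⟩, ⟨b, hbm⟩, hb⟩, rfl⟩ := mk_surjective u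
    have hu' := congrArg val hu
    rw [hχ, val_mk, locMap_mk, val_zero, ← Localization.mk_zero 1, Localization.mk_eq_mk_iff,
      Localization.r_iff_exists] at hu'
    obtain ⟨⟨t, ht⟩, htu⟩ := hu'
    obtain ⟨c, N, s, hs, -, h⟩ := key t ht
    refine ⟨N, val_injective _ ?_⟩
    rw [val_mul, val_pow, val_mk, val_mk, val_zero, Localization.mk_pow, Localization.mk_mul,
      ← Localization.mk_zero 1, Localization.mk_eq_mk_iff, Localization.r_iff_exists]
    refine ⟨⟨s, hs⟩, ?_⟩
    simp at htu ⊢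
    linear_combination c * htu - a * h

theorem magic_of_potions_isOpenImmersion
    {M I J : Type*} {A : Type} [AddCommGroup M] [DecidableEq M] [CommRing A]
    [Finite J]
    (𝒜 : M → Submodule ℤ A) [GradedRing 𝒜]
    (f : I → A) (g : J → A)
    (hf : ∀ i, f i ≠ 0 ∧ ∃ m, f i ∈ 𝒜 m)
    (hg : ∀ j, g j ≠ 0 ∧ ∃ m, g j ∈ 𝒜 m)
    (hrel : IsRelevant 𝒜 f)
    (hdivclosed : {x : A | x ≠ 0 ∧ (∃ m, x ∈ 𝒜 m) ∧ ∃ i, x ∣ f i} = Set.range f)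
    (χ : HomogeneousLocalization 𝒜 (Submonoid.closure (Set.range f)) →+*
        HomogeneousLocalization 𝒜 (Submonoid.closure (Set.range f ∪ Set.range g)))
    (hχ : ∀ w, (χ w).val =
      locMap (Submonoid.closure_mono Set.subset_union_left) w.val) :
    IsOpenImmersion (Spec.map (CommRingCat.ofHom χ)) := by
  classical
  have hdeg : ∀ x ∈ AddSubgroup.closure (divisorDegrees 𝒜 f),
      ∃ s ∈ Submonoid.closure (Set.range f), ∃ t ∈ Submonoid.closure (Set.range f),
        ∃ ms mt, s ∈ 𝒜 ms ∧ t ∈ 𝒜 mt ∧ x = ms - mt := by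
    apply degree_diff
    rintro m ⟨x, hx0, hxm, i, hi⟩
    refine ⟨x, Submonoid.subset_closure ?_, hxm⟩
    rw [← hdivclosed]
    exact ⟨hx0, ⟨m, hxm⟩, i, hi⟩
  choose m hm using fun j => (hg j).2
  choose n hn hnm using fun j => hrel (m j)
  choose s hs t ht ms mt hsm htm hst using fun j => hdeg _ (hnm j)
  have := Fintype.ofFinite J
  have hgt : ∀ j, g j ^ n j * t j ∈ 𝒜 (ms j) := by
    intro j
    have h := SetLike.mul_mem_graded (SetLike.pow_mem_graded (n j) (hm j)) (htm j)
    rwa [hst j, sub_add_cancel] at h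
  have hgT : ∀ j, g j ∈ Submonoid.closure (Set.range f ∪ Set.range g) :=
    fun j => Submonoid.subset_closure (Set.mem_union_right _ ⟨j, rfl⟩)
  refine potion_aux 𝒜 _ (χ := χ) hχ (d := ∑ j, ms j) (W := ∏ j, (g j ^ n j * t j))
    (D := ∏ j, s j) (SetLike.prod_mem_graded 𝒜 _ _ fun j _ => hgt j)
    (SetLike.prod_mem_graded 𝒜 _ _ fun j _ => hsm j)
    (prod_mem fun j _ => mul_mem (pow_mem (hgT j) _)
      (Submonoid.closure_mono Set.subset_union_left (ht j)))
    (prod_mem fun j _ => hs j) ?_ ?_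
  · intro x hx
    induction hx using Submonoid.closure_induction with
    | mem x hx =>
      obtain ⟨i, rfl⟩ := hx
      exact (hf i).2
    | one => exact ⟨0, SetLike.one_mem_graded 𝒜⟩
    | mul x y _ _ hx hy =>
      obtain ⟨a, ha⟩ := hx
      obtain ⟨b, hb⟩ := hy
      exact ⟨_, SetLike.mul_mem_graded ha hb⟩
  · intro x hx
    induction hx using Submonoid.closure_induction with
    | mem x hx =>
      rcases hx with hx | ⟨j, rfl⟩
      · exact ⟨1, 0, x, Submonoid.subset_closure hx, ⟨0, SetLike.one_mem_graded 𝒜⟩, by simp⟩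
      · refine ⟨(g j ^ (n j - 1) * t j) * ∏ k ∈ Finset.univ.erase j, (g k ^ n k * t k), 1, 1,
          one_mem _, ⟨_, SetLike.mul_mem_graded (SetLike.mul_mem_graded
            (SetLike.pow_mem_graded _ (hm j)) (htm j))
            (SetLike.prod_mem_graded 𝒜 _ _ fun k _ => hgt k)⟩, ?_⟩
        rw [← Finset.mul_prod_erase _ _ (Finset.mem_univ j)]
        have : g j ^ n j = g j ^ (n j - 1) * g j := by
          rw [← pow_succ, Nat.sub_add_cancel (hn j)]
        rw [this]
        ring
    | one => exact ⟨1, 0, 1, one_mem _, ⟨0, SetLike.one_mem_graded 𝒜⟩, by simp⟩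
    | mul x y _ _ hx hy =>
      obtain ⟨c, N, s, hs, ⟨a, ha⟩, h⟩ := hx
      obtain ⟨c', N', s', hs', ⟨b, hb⟩, h'⟩ := hy
      refine ⟨c * c', N + N', s * s', mul_mem hs hs', ⟨_, SetLike.mul_mem_graded ha hb⟩, ?_⟩
      calc c * c' * (x * y) = (c * x) * (c' * y) := by ring
        _ = _ := by rw [h, h']; ring
end

section
/- (Cocycle/triple intersection for glueing.) Let f be a relevant family of homogeneous elements, closed under homogeneous divisors (f = f̲), of an M-graded commutative ring A, and let g and k be finite families of homogeneous elements of A. Consider the canonical ring homomorphisms between potions χ_{g} : A_{(f)} → A_{(f∪g)}, χ_{k} : A_{(f)} → A_{(f∪k)}, and χ_{g∪k} : A_{(f)} → A_{(f∪g∪k)}. Then, inside the topological space Spec(A_{(f)}), the intersection of the ranges of Spec.map χ_{g} and Spec.map χ_{k} equals the range of Spec.map χ_{g∪k}. -/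
/-!
Statement 9 (Cocycle/triple intersection for glueing): for a relevant, divisor-closed
family `f` and finite families `g`, `k`, inside `Spec (A_{(f)})` the intersection of
the images of `Spec (A_{(f∪g)})` and `Spec (A_{(f∪k)})` equals the image of
`Spec (A_{(f∪g∪k)})`.
-/

open AlgebraicGeometry

/-- `w` is a fraction `h^(n+1) t / s` of degree zero with `s, t ∈ S`. -/
def PotionWit {M A : Type*} [AddCommGroup M] [DecidableEq M] [CommRing A]
    (𝒜 : M → Submodule ℤ A) [GradedRing 𝒜] (S : Submonoid A)
    (h : A) (w : HomogeneousLocalization 𝒜 S) : Prop :=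
  ∃ (n : ℕ) (t : A) (s : S) (d d' : M), h ∈ 𝒜 d ∧ t ∈ S ∧ t ∈ 𝒜 d' ∧
    (s : A) ∈ 𝒜 ((n + 1) • d + d') ∧ w.val = Localization.mk (h ^ (n + 1) * t) s

theorem potion_degree {M A I : Type*} [AddCommGroup M] [DecidableEq M] [CommRing A]
    (𝒜 : M → Submodule ℤ A) [GradedRing 𝒜] (f : I → A)
    (hdivclosed : {x : A | x ≠ 0 ∧ (∃ m, x ∈ 𝒜 m) ∧ ∃ i, x ∣ f i} = Set.range f)
    (m : M) (hm : m ∈ AddSubgroup.closure (divisorDegrees 𝒜 f)) :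
    ∃ s ∈ Submonoid.closure (Set.range f), ∃ t ∈ Submonoid.closure (Set.range f),
      ∃ d, t ∈ 𝒜 d ∧ s ∈ 𝒜 (m + d) := by
  induction hm using AddSubgroup.closure_induction with
  | mem x hx =>
    obtain ⟨y, h0, hy, i, hi⟩ := hx
    have : y ∈ Set.range f := by rw [← hdivclosed]; exact ⟨h0, ⟨_, hy⟩, i, hi⟩
    exact ⟨y, Submonoid.subset_closure this, 1, one_mem _, 0, SetLike.one_mem_graded 𝒜, by simpa⟩
  | zero => exact ⟨1, one_mem _, 1, one_mem _, 0, SetLike.one_mem_graded 𝒜,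
      by simpa using SetLike.one_mem_graded 𝒜⟩
  | add x y _ _ hx hy =>
    obtain ⟨s, hs, t, ht, d, h1, h2⟩ := hx
    obtain ⟨s', hs', t', ht', d', h1', h2'⟩ := hy
    refine ⟨s * s', mul_mem hs hs', t * t', mul_mem ht ht', d + d',
      SetLike.mul_mem_graded h1 h1', ?_⟩
    have := SetLike.mul_mem_graded h2 h2'
    rwa [show x + y + (d + d') = (x + d) + (y + d') by abel]
  | neg x _ hx =>
    obtain ⟨s, hs, t, ht, d, h1, h2⟩ := hx
    refine ⟨t, ht, s, hs, x + d, h2, ?_⟩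
    rwa [show -x + (x + d) = d by abel]

theorem potion_wit {M A I : Type*} [AddCommGroup M] [DecidableEq M] [CommRing A]
    (𝒜 : M → Submodule ℤ A) [GradedRing 𝒜] (f : I → A)
    (hrel : IsRelevant 𝒜 f)
    (hdivclosed : {x : A | x ≠ 0 ∧ (∃ m, x ∈ 𝒜 m) ∧ ∃ i, x ∣ f i} = Set.range f)
    (h : A) (hh : ∃ m, h ∈ 𝒜 m) :
    ∃ w, PotionWit 𝒜 (Submonoid.closure (Set.range f)) h w := by
  obtain ⟨m, hm⟩ := hh
  obtain ⟨n, hn, hn'⟩ := hrel m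
  obtain ⟨n, rfl⟩ := Nat.exists_eq_succ_of_ne_zero hn.ne'
  obtain ⟨s, hs, t, ht, d, h1, h2⟩ := potion_degree 𝒜 f hdivclosed _ hn'
  refine ⟨HomogeneousLocalization.mk ⟨(n + 1) • m + d, ⟨h ^ (n + 1) * t, ?_⟩, ⟨s, h2⟩, hs⟩,
    n, t, ⟨s, hs⟩, m, d, hm, ht, h1, h2, ?_⟩
  · exact SetLike.mul_mem_graded (SetLike.pow_mem_graded _ hm) h1
  · rw [HomogeneousLocalization.val_mk]

theorem potion_claim {M A : Type*} [AddCommGroup M] [DecidableEq M] [CommRing A]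
    (𝒜 : M → Submodule ℤ A) [GradedRing 𝒜] (F G : Set A)
    (hF : ∀ x ∈ F, ∃ m, x ∈ 𝒜 m)
    (N : Submonoid (HomogeneousLocalization 𝒜 (Submonoid.closure F)))
    (hN : ∀ h ∈ G, ∃ w ∈ N, PotionWit 𝒜 (Submonoid.closure F) h w)
    (b : A) (hb : b ∈ Submonoid.closure (F ∪ G)) :
    ∃ u ∈ N, ∃ (c : A) (d d' : M) (s : Submonoid.closure F), b ∈ 𝒜 d ∧ c ∈ 𝒜 d' ∧
      (s : A) ∈ 𝒜 (d + d') ∧ u.val = Localization.mk (b * c) s := by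
  induction hb using Submonoid.closure_induction with
  | mem x hx =>
    rcases hx with hx | hx
    · obtain ⟨m, hm⟩ := hF x hx
      refine ⟨1, one_mem _, 1, m, 0, ⟨x, Submonoid.subset_closure hx⟩, hm,
        SetLike.one_mem_graded 𝒜, by simpa, ?_⟩
      rw [HomogeneousLocalization.val_one, mul_one]
      exact (Localization.mk_self
        (⟨x, Submonoid.subset_closure hx⟩ : Submonoid.closure F)).symm
    · obtain ⟨w, hw, n, t, s, d, d', h1, h2, h3, h4, h5⟩ := hN x hx
      refine ⟨w, hw, x ^ n * t, d, n • d + d', s, h1,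
        SetLike.mul_mem_graded (SetLike.pow_mem_graded _ h1) h3, ?_, ?_⟩
      · rwa [show d + (n • d + d') = (n + 1) • d + d' by rw [succ_nsmul]; abel]
      · rw [h5, pow_succ]; congr 1; ring
  | one =>
    refine ⟨1, one_mem _, 1, 0, 0, 1, SetLike.one_mem_graded 𝒜, SetLike.one_mem_graded 𝒜,
      by simpa using SetLike.one_mem_graded 𝒜, ?_⟩
    rw [HomogeneousLocalization.val_one, mul_one, Localization.mk_one]
  | mul x y _ _ hx hy =>
    obtain ⟨u, hu, c, d, d', s, h1, h2, h3, h4⟩ := hx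
    obtain ⟨v, hv, c', e, e', s', k1, k2, k3, k4⟩ := hy
    refine ⟨u * v, mul_mem hu hv, c * c', d + e, d' + e', s * s', SetLike.mul_mem_graded h1 k1,
      SetLike.mul_mem_graded h2 k2, ?_, ?_⟩
    · have := SetLike.mul_mem_graded h3 k3
      rwa [show d + e + (d' + e') = d + d' + (e + e') by abel]
    · rw [HomogeneousLocalization.val_mul, h4, k4, Localization.mk_mul]; congr 1; ring

theorem potion_range {M A : Type*} [AddCommGroup M] [DecidableEq M] [CommRing A]
    (𝒜 : M → Submodule ℤ A) [GradedRing 𝒜] (F G : Set A)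
    (hF : ∀ x ∈ F, ∃ m, x ∈ 𝒜 m)
    (e : A → HomogeneousLocalization 𝒜 (Submonoid.closure F))
    (he : ∀ h ∈ G, PotionWit 𝒜 (Submonoid.closure F) h (e h))
    (χ : HomogeneousLocalization 𝒜 (Submonoid.closure F) →+*
      HomogeneousLocalization 𝒜 (Submonoid.closure (F ∪ G)))
    (hχ : ∀ w, (χ w).val =
      locMap (Submonoid.closure_mono Set.subset_union_left) w.val) :
    Set.range (PrimeSpectrum.comap χ) = {p | ∀ h ∈ G, e h ∉ p.asIdeal} := by
  have hle : Submonoid.closure F ≤ Submonoid.closure (F ∪ G) :=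
    Submonoid.closure_mono Set.subset_union_left
  set N := Submonoid.closure (e '' G) with hNdef
  have claim := potion_claim 𝒜 F G hF N
    (fun h hh => ⟨e h, Submonoid.subset_closure ⟨h, hh, rfl⟩, he h hh⟩)
  let _ := χ.toAlgebra
  have hunit : ∀ w ∈ N, IsUnit (χ w) := by
    intro w hw
    induction hw using Submonoid.closure_induction with
    | mem x hx =>
      obtain ⟨h, hh, rfl⟩ := hx
      obtain ⟨n, t, s, d, d', h1, h2, h3, h4, h5⟩ := he h hh
      have hden : h ^ (n + 1) * t ∈ Submonoid.closure (F ∪ G) :=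
        mul_mem (pow_mem (Submonoid.subset_closure (Set.mem_union_right F hh)) _) (hle h2)
      refine IsUnit.of_mul_eq_one (HomogeneousLocalization.mk ⟨(n + 1) • d + d', ⟨s, h4⟩,
        ⟨h ^ (n + 1) * t, SetLike.mul_mem_graded (SetLike.pow_mem_graded _ h1) h3⟩, hden⟩) ?_
      apply HomogeneousLocalization.val_injective
      rw [HomogeneousLocalization.val_mul, hχ, h5, locMap_mk, HomogeneousLocalization.val_mk,
        HomogeneousLocalization.val_one, Localization.mk_mul, ← Localization.mk_one,
        Localization.mk_eq_mk_iff, Localization.r_iff_exists]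
      exact ⟨1, by simp; ring⟩
    | one => simp
    | mul x y _ _ hx hy => rw [map_mul]; exact hx.mul hy
  have hloc : IsLocalization N (HomogeneousLocalization 𝒜 (Submonoid.closure (F ∪ G))) := by
    refine ⟨?_, ?_, ?_⟩
    · rintro ⟨w, hw⟩; exact hunit w hw
    · intro z
      obtain ⟨⟨d, ⟨a, ha⟩, ⟨b, hb⟩, hbT⟩, rfl⟩ := HomogeneousLocalization.mk_surjective z
      by_cases hb0 : b = 0
      · have h0 : (0 : A) ∈ Submonoid.closure (F ∪ G) := by rw [← hb0]; exact hbT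
        haveI := HomogeneousLocalization.subsingleton 𝒜 h0
        exact ⟨(0, 1), Subsingleton.elim _ _⟩
      · obtain ⟨u, hu, c, d₁, d', s, h1, h2, h3, h4⟩ := claim b hbT
        obtain rfl : d = d₁ := DirectSum.degree_eq_of_mem_mem 𝒜 hb h1 hb0
        refine ⟨(HomogeneousLocalization.mk ⟨d + d', ⟨a * c, SetLike.mul_mem_graded ha h2⟩,
          ⟨s, h3⟩, s.2⟩, ⟨u, hu⟩), ?_⟩
        change _ * χ u = χ _
        apply HomogeneousLocalization.val_injective
        rw [HomogeneousLocalization.val_mul, hχ, hχ, h4, locMap_mk, HomogeneousLocalization.val_mk,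
          HomogeneousLocalization.val_mk, locMap_mk, Localization.mk_mul,
          Localization.mk_eq_mk_iff, Localization.r_iff_exists]
        exact ⟨1, by simp; ring⟩
    · intro x y hxy
      change χ x = χ y at hxy
      obtain ⟨⟨d, ⟨a, ha⟩, ⟨b, hb⟩, hbT⟩, hz⟩ := HomogeneousLocalization.mk_surjective (x - y)
      have h0 : (χ (x - y)).val = 0 := by rw [map_sub, hxy, sub_self, HomogeneousLocalization.val_zero]
      rw [← hz, hχ, HomogeneousLocalization.val_mk, locMap_mk, Localization.mk_eq_mk',
        IsLocalization.mk'_eq_zero_iff] at h0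
      obtain ⟨⟨m, hm⟩, h0⟩ := h0
      obtain ⟨u, hu, c, d₁, d', s, h1, h2, h3, h4⟩ := claim m hm
      refine ⟨⟨u, hu⟩, ?_⟩
      rw [← sub_eq_zero, ← mul_sub, ← hz]
      apply HomogeneousLocalization.val_injective
      rw [HomogeneousLocalization.val_mul, h4, HomogeneousLocalization.val_mk,
        HomogeneousLocalization.val_zero, Localization.mk_mul]
      have : m * c * a = 0 := by
        have h0' : m * a = 0 := h0
        rw [mul_right_comm, h0', zero_mul]
      simp only [this]
      exact Localization.mk_zero _
  have := PrimeSpectrum.localization_comap_range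
    (HomogeneousLocalization 𝒜 (Submonoid.closure (F ∪ G))) N
  change Set.range (PrimeSpectrum.comap χ) = _ at this
  rw [this]
  ext p
  simp only [Set.mem_ofPred_eq]
  constructor
  · intro hd h hh hp
    exact Set.disjoint_left.1 hd (Submonoid.subset_closure ⟨h, hh, rfl⟩) hp
  · intro hp
    have : N ≤ p.asIdeal.primeCompl := by
      rw [hNdef, Submonoid.closure_le]
      rintro _ ⟨h, hh, rfl⟩
      exact hp h hh
    exact Set.disjoint_left.2 fun x hx => this hx

theorem magic_of_potions_triple_intersection
    {M I J K : Type*} {A : Type} [AddCommGroup M] [DecidableEq M] [CommRing A]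
    [Finite J] [Finite K]
    (𝒜 : M → Submodule ℤ A) [GradedRing 𝒜]
    (f : I → A) (g : J → A) (k : K → A)
    (hf : ∀ i, f i ≠ 0 ∧ ∃ m, f i ∈ 𝒜 m)
    (hg : ∀ j, g j ≠ 0 ∧ ∃ m, g j ∈ 𝒜 m)
    (hk : ∀ c, k c ≠ 0 ∧ ∃ m, k c ∈ 𝒜 m)
    (hrel : IsRelevant 𝒜 f)
    (hdivclosed : {x : A | x ≠ 0 ∧ (∃ m, x ∈ 𝒜 m) ∧ ∃ i, x ∣ f i} = Set.range f)
    (χg : HomogeneousLocalization 𝒜 (Submonoid.closure (Set.range f)) →+*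
        HomogeneousLocalization 𝒜 (Submonoid.closure (Set.range f ∪ Set.range g)))
    (hχg : ∀ w, (χg w).val =
      locMap (Submonoid.closure_mono Set.subset_union_left) w.val)
    (χk : HomogeneousLocalization 𝒜 (Submonoid.closure (Set.range f)) →+*
        HomogeneousLocalization 𝒜 (Submonoid.closure (Set.range f ∪ Set.range k)))
    (hχk : ∀ w, (χk w).val =
      locMap (Submonoid.closure_mono Set.subset_union_left) w.val)
    (χgk : HomogeneousLocalization 𝒜 (Submonoid.closure (Set.range f)) →+*
        HomogeneousLocalization 𝒜
          (Submonoid.closure (Set.range f ∪ (Set.range g ∪ Set.range k))))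
    (hχgk : ∀ w, (χgk w).val =
      locMap (Submonoid.closure_mono Set.subset_union_left) w.val) :
    Set.range (Spec.map (CommRingCat.ofHom χg)).base ∩
        Set.range (Spec.map (CommRingCat.ofHom χk)).base =
      Set.range (Spec.map (CommRingCat.ofHom χgk)).base := by
  classical
  have hF : ∀ x ∈ Set.range f, ∃ m, x ∈ 𝒜 m := by
    rintro _ ⟨i, rfl⟩; exact (hf i).2
  have hex : ∀ h : A, ∃ w, (∃ m, h ∈ 𝒜 m) →
      PotionWit 𝒜 (Submonoid.closure (Set.range f)) h w := by
    intro h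
    by_cases hh : ∃ m, h ∈ 𝒜 m
    · obtain ⟨w, hw⟩ := potion_wit 𝒜 f hrel hdivclosed h hh
      exact ⟨w, fun _ => hw⟩
    · exact ⟨0, fun h => absurd h hh⟩
  choose e he using hex
  have hG : ∀ x ∈ Set.range g, ∃ m, x ∈ 𝒜 m := by
    rintro _ ⟨i, rfl⟩; exact (hg i).2
  have hK : ∀ x ∈ Set.range k, ∃ m, x ∈ 𝒜 m := by
    rintro _ ⟨i, rfl⟩; exact (hk i).2
  have r1 := potion_range 𝒜 _ (Set.range g) hF e (fun h hh => he h (hG h hh)) χg hχg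
  have r2 := potion_range 𝒜 _ (Set.range k) hF e (fun h hh => he h (hK h hh)) χk hχk
  have r3 := potion_range 𝒜 _ (Set.range g ∪ Set.range k) hF e
    (fun h hh => he h (hh.elim (hG h) (hK h))) χgk hχgk
  change Set.range (PrimeSpectrum.comap χg) ∩ Set.range (PrimeSpectrum.comap χk) =
    Set.range (PrimeSpectrum.comap χgk)
  rw [r1, r2, r3]
  ext p
  simp only [Set.mem_inter_iff, Set.mem_ofPred_eq, Set.mem_union]
  exact ⟨fun h x hx => hx.elim (h.1 x) (h.2 x), fun h => ⟨fun x hx => h x (Or.inl hx),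
    fun x hx => h x (Or.inr hx)⟩⟩
end

section
/- (Base change of potions.) Let R be a commutative ring, A a commutative R-algebra with an M-grading 𝒜 : M → Submodule R A making it a graded R-algebra, and R' a commutative R-algebra. Equip A ⊗_R R' with the M-grading ℬ given by ℬ_m = (𝒜_m).baseChange R' (the R'-span of the image of 𝒜_m ⊗ R'), assumed to form a graded R'-algebra structure on A ⊗_R R'. Let f = {a_i}_{i∈I} be a family of homogeneous elements of A, S the multiplicative submonoid of A generated by f, and S' the multiplicative submonoid of A ⊗_R R' generated by the elements a_i ⊗ 1. Then there is a ring isomorphism A_{(f)} ⊗_R R' ≅ (A ⊗_R R')_{(f⊗1)} between the base change of the potion of A at f and the potion of A ⊗_R R' at the family {a_i ⊗ 1}. -/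
/-!
Statement 12 (Base change of potions): for a graded `R`-algebra `A`, a family `f` of
homogeneous elements of `A` and an `R`-algebra `R'`, the base change `A_{(f)} ⊗_R R'`
of the potion of `A` at `f` is isomorphic, as a ring, to the potion of the `M`-graded
`R'`-algebra `A ⊗_R R'` (graded by the base-changed submodules, i.e. the `R'`-spans
of the images of the `𝒜 m`) at the family `{aᵢ ⊗ 1}`.
-/

open TensorProduct

attribute [local instance] Algebra.TensorProduct.rightAlgebra

/-- The potion `A_{(f)}` of a graded `R`-algebra is an `R`-algebra, via the degree
zero part `𝒜 0`. -/
noncomputable local instance {M R A : Type*} [AddCommGroup M] [DecidableEq M]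
    [CommRing R] [CommRing A] [Algebra R A]
    (𝒜 : M → Submodule R A) [GradedAlgebra 𝒜] (S : Submonoid A) :
    Algebra R (HomogeneousLocalization 𝒜 S) :=
  ((HomogeneousLocalization.fromZeroRingHom 𝒜 S).comp (algebraMap R (𝒜 0))).toAlgebra

section PotionHelpers

variable {M R A : Type*} [AddCommGroup M] [DecidableEq M]
    [CommRing R] [CommRing A] [Algebra R A]
    (𝒜 : M → Submodule R A) [GradedAlgebra 𝒜]

/-- `a ↦ a / d`. -/
noncomputable def potDiv (S : Submonoid A) (m : M) (d : A) (hd : d ∈ S) (hm : d ∈ 𝒜 m) :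
    𝒜 m →ₗ[R] HomogeneousLocalization 𝒜 S where
  toFun a := HomogeneousLocalization.mk ⟨m, a, ⟨d, hm⟩, hd⟩
  map_add' a b := by
    apply HomogeneousLocalization.val_injective
    simp [HomogeneousLocalization.val_mk, Localization.add_mk_self]
  map_smul' r a := by
    apply HomogeneousLocalization.val_injective
    rw [RingHom.id_apply, Algebra.smul_def, HomogeneousLocalization.val_mul]
    have : (algebraMap R (HomogeneousLocalization 𝒜 S) r).val
        = Localization.mk (algebraMap R A r) 1 := rfl
    rw [this]
    simp [HomogeneousLocalization.val_mk, Localization.mk_mul, Algebra.smul_def]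

lemma potDiv_val (S : Submonoid A) (m : M) (d : A) (hd : d ∈ S) (hm : d ∈ 𝒜 m) (a : 𝒜 m) :
    (potDiv 𝒜 S m d hd hm a).val = Localization.mk (a : A) ⟨d, hd⟩ := rfl

lemma pot_hom (f : A → Prop) (S : Submonoid A) (h : S = Submonoid.closure {a | f a})
    (hf : ∀ a, f a → ∃ m, a ∈ 𝒜 m) : ∀ s ∈ S, ∃ m, s ∈ 𝒜 m := by
  subst h
  intro s hs
  induction hs using Submonoid.closure_induction with
  | mem x hx => exact hf x hx
  | one => exact ⟨0, SetLike.GradedOne.one_mem⟩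
  | mul x y _ _ hx hy =>
    obtain ⟨m, hm⟩ := hx
    obtain ⟨n, hn⟩ := hy
    exact ⟨m + n, SetLike.GradedMul.mul_mem hm hn⟩

variable (R' : Type*) [CommRing R'] [Algebra R R']

lemma pot_inj (m : M) : Function.Injective (LinearMap.rTensor R' (𝒜 m).subtype) := by
  let p : A →ₗ[R] 𝒜 m :=
    (DirectSum.component R M (fun i => 𝒜 i) m) ∘ₗ (DirectSum.decomposeLinearEquiv 𝒜).toLinearMap
  have hp : p ∘ₗ (𝒜 m).subtype = LinearMap.id := by
    ext x
    simp only [p, LinearMap.comp_apply, Submodule.subtype_apply, LinearMap.id_apply]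
    change ((DirectSum.decompose 𝒜 (x : A)) m : A) = x
    simp
  apply Function.LeftInverse.injective (g := LinearMap.rTensor R' p)
  intro x
  rw [← LinearMap.comp_apply, ← LinearMap.rTensor_comp, hp]
  simp

/-- multiplication by a homogeneous element -/
noncomputable def potMul (m k : M) (s : A) (hs : s ∈ 𝒜 k) : 𝒜 m →ₗ[R] 𝒜 (k + m) where
  toFun a := ⟨s * a, SetLike.GradedMul.mul_mem hs a.2⟩
  map_add' a b := by ext; simp [mul_add]
  map_smul' r a := by ext; simp

lemma potDiv_mul (S : Submonoid A) (m : M) (d : A) (hd : d ∈ S) (hm : d ∈ 𝒜 m)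
    (k : M) (s : A) (hs : s ∈ S) (hk : s ∈ 𝒜 k) :
    potDiv 𝒜 S (k + m) (s * d) (S.mul_mem hs hd) (SetLike.GradedMul.mul_mem hk hm) ∘ₗ
      potMul 𝒜 m k s hk = potDiv 𝒜 S m d hd hm := by
  ext a
  rw [LinearMap.comp_apply, potDiv_val, potDiv_val, Localization.mk_eq_mk_iff,
    Localization.r_iff_exists]
  exact ⟨1, by simp [potMul]; ring⟩

lemma pot_surj (S : Submonoid A) (x : HomogeneousLocalization 𝒜 S ⊗[R] R') :
    ∃ (m : M) (d : A) (hd : d ∈ S) (hm : d ∈ 𝒜 m) (t : 𝒜 m ⊗[R] R'),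
      LinearMap.rTensor R' (potDiv 𝒜 S m d hd hm) t = x := by
  induction x with
  | zero => exact ⟨0, 1, S.one_mem, SetLike.GradedOne.one_mem, 0, by simp⟩
  | tmul a r =>
    obtain ⟨⟨m, n, d, hd⟩, rfl⟩ := HomogeneousLocalization.mk_surjective a
    exact ⟨m, d, hd, d.2, n ⊗ₜ r, by rw [LinearMap.rTensor_tmul]; rfl⟩
  | add x y hx hy =>
    obtain ⟨m, d, hd, hm, t, rfl⟩ := hx
    obtain ⟨m', d', hd', hm', t', rfl⟩ := hy
    rw [← potDiv_mul 𝒜 S m d hd hm m' d' hd' hm', ← potDiv_mul 𝒜 S m' d' hd' hm' m d hd hm]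
    have key : ∀ (k k' : M) (e e' : A) (he : e ∈ S) (hk : e ∈ 𝒜 k) (he' : e' ∈ S)
        (hk' : e' ∈ 𝒜 k') (u : 𝒜 k ⊗[R] R') (u' : 𝒜 k' ⊗[R] R'), k = k' → e = e' →
        ∃ (m : M) (d : A) (hd : d ∈ S) (hm : d ∈ 𝒜 m) (t : 𝒜 m ⊗[R] R'),
        LinearMap.rTensor R' (potDiv 𝒜 S m d hd hm) t =
        LinearMap.rTensor R' (potDiv 𝒜 S k e he hk) u +
        LinearMap.rTensor R' (potDiv 𝒜 S k' e' he' hk') u' := by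
      rintro k _ e _ he hk he' hk' u u' rfl rfl
      exact ⟨k, e, he, hk, u + u', by rw [map_add]⟩
    rw [LinearMap.rTensor_comp, LinearMap.rTensor_comp]
    exact key _ _ _ _ _ _ _ _ _ _ (add_comm _ _) (mul_comm _ _)

end PotionHelpers

theorem potion_baseChange
    {M R A R' I : Type*} [AddCommGroup M] [DecidableEq M]
    [CommRing R] [CommRing A] [Algebra R A] [CommRing R'] [Algebra R R']
    (𝒜 : M → Submodule R A) [GradedAlgebra 𝒜]
    (ℬ : M → Submodule R' (A ⊗[R] R')) [GradedAlgebra ℬ]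
    (hℬ : ∀ m, ℬ m = Submodule.span R'
      ((Algebra.TensorProduct.includeLeft : A →ₐ[R] A ⊗[R] R') '' (𝒜 m)))
    (f : I → A)
    (hf : ∀ i, f i ≠ 0 ∧ ∃ m, f i ∈ 𝒜 m) :
    Nonempty
      ((HomogeneousLocalization 𝒜 (Submonoid.closure (Set.range f)) ⊗[R] R') ≃+*
        HomogeneousLocalization ℬ
          (Submonoid.closure (Set.range fun i => (f i ⊗ₜ[R] (1 : R') : A ⊗[R] R')))) := by
  have hS : ∀ s ∈ Submonoid.closure (Set.range f), ∃ m, s ∈ 𝒜 m :=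
    pot_hom 𝒜 (fun a => a ∈ Set.range f) _ rfl (by rintro _ ⟨i, rfl⟩; exact (hf i).2)
  have hS' : Submonoid.closure (Set.range fun i => (f i ⊗ₜ[R] (1 : R') : A ⊗[R] R')) =
      (Submonoid.closure (Set.range f)).map
        (Algebra.TensorProduct.includeLeft : A →ₐ[R] A ⊗[R] R') := by
    rw [MonoidHom.map_mclosure, ← Set.range_comp]
    rfl
  generalize Submonoid.closure (Set.range f) = S at *
  generalize Submonoid.closure (Set.range fun i => (f i ⊗ₜ[R] (1 : R') : A ⊗[R] R')) = S' at *
  have hmem : ∀ {s}, s ∈ S → s ⊗ₜ[R] (1 : R') ∈ S' := by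
    intro s hs
    rw [hS']
    exact ⟨s, hs, rfl⟩
  have hBmem : ∀ {m} {a : A}, a ∈ 𝒜 m → a ⊗ₜ[R] (1 : R') ∈ ℬ m := by
    intro m a ha
    rw [hℬ]
    exact Submodule.subset_span ⟨a, ha, rfl⟩
  have hsm : ∀ (r r' : R') (a : A), r • (a ⊗ₜ[R] r') = a ⊗ₜ[R] (r * r') := by
    intro r r' a
    rw [Algebra.smul_def]
    change (1 ⊗ₜ[R] r) * (a ⊗ₜ[R] r') = _
    simp
  have hrange : ∀ m, ∀ x ∈ ℬ m, ∃ t, LinearMap.rTensor R' (𝒜 m).subtype t = x := by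
    intro m x hx
    rw [hℬ] at hx
    induction hx using Submodule.span_induction with
    | mem x hx =>
      obtain ⟨a, ha, rfl⟩ := hx
      exact ⟨⟨a, ha⟩ ⊗ₜ 1, by simp⟩
    | zero => exact ⟨0, by simp⟩
    | add x y _ _ hx hy =>
      obtain ⟨t, rfl⟩ := hx
      obtain ⟨u, rfl⟩ := hy
      exact ⟨t + u, by simp⟩
    | smul r x hx0 hx =>
      obtain ⟨t, rfl⟩ := hx
      clear hx0
      refine ⟨LinearMap.lTensor _ (LinearMap.mulLeft R r) t, ?_⟩
      induction t with
      | zero => simp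
      | tmul a b => simp [hsm]
      | add x y hx hy => simp only [map_add, smul_add, hx, hy]
  let g : 𝒜 →+*ᵍ ℬ :=
    { ((Algebra.TensorProduct.includeLeft : A →ₐ[R] A ⊗[R] R') : A →+* A ⊗[R] R') with
      map_mem := fun h => hBmem h }
  let φ₁ : HomogeneousLocalization 𝒜 S →+* HomogeneousLocalization ℬ S' :=
    HomogeneousLocalization.map g (fun s hs => hmem hs)
  let _ : Algebra R (HomogeneousLocalization ℬ S') :=
    ((algebraMap R' (HomogeneousLocalization ℬ S')).comp (algebraMap R R')).toAlgebra
  have hR' : ∀ r : R', (algebraMap R' (HomogeneousLocalization ℬ S') r).val =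
      Localization.mk ((1 : A) ⊗ₜ[R] r) 1 := fun r => rfl
  let φ₁a : HomogeneousLocalization 𝒜 S →ₐ[R] HomogeneousLocalization ℬ S' :=
    { φ₁ with
      commutes' := by
        intro r
        apply HomogeneousLocalization.val_injective
        have h : (algebraMap R A r) ⊗ₜ[R] (1 : R') = (1 : A) ⊗ₜ[R] (algebraMap R R' r) := by
          rw [Algebra.algebraMap_eq_smul_one r, Algebra.algebraMap_eq_smul_one r,
            TensorProduct.smul_tmul]
        change Localization.mk ((algebraMap R A r) ⊗ₜ[R] (1 : R')) (1 : S') =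
          Localization.mk ((1 : A) ⊗ₜ[R] (algebraMap R R' r)) 1
        rw [h] }
  let φ₂a : R' →ₐ[R] HomogeneousLocalization ℬ S' :=
    { algebraMap R' (HomogeneousLocalization ℬ S') with
      commutes' := fun r => rfl }
  let φ : HomogeneousLocalization 𝒜 S ⊗[R] R' →ₐ[R] HomogeneousLocalization ℬ S' :=
    Algebra.TensorProduct.lift φ₁a φ₂a (fun _ _ => Commute.all _ _)
  have hφ : ∀ (m : M) (d : A) (hd : d ∈ S) (hm : d ∈ 𝒜 m) (t : 𝒜 m ⊗[R] R'),
      (φ (LinearMap.rTensor R' (potDiv 𝒜 S m d hd hm) t)).val =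
      Localization.mk (LinearMap.rTensor R' (𝒜 m).subtype t) ⟨d ⊗ₜ 1, hmem hd⟩ := by
    intro m d hd hm t
    induction t with
    | zero => simp [Localization.mk_zero]
    | tmul a r =>
      simp only [LinearMap.rTensor_tmul, φ, Algebra.TensorProduct.lift_tmul]
      rw [HomogeneousLocalization.val_mul]
      change Localization.mk ((a : A) ⊗ₜ[R] (1 : R')) ⟨d ⊗ₜ 1, hmem hd⟩ *
        Localization.mk ((1 : A) ⊗ₜ[R] r) 1 = _
      rw [Localization.mk_mul]
      simp
    | add x y hx hy =>
      simp only [map_add, HomogeneousLocalization.val_add, hx, hy, Localization.add_mk_self]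
  refine ⟨RingEquiv.ofBijective φ ⟨?_, ?_⟩⟩
  · rw [injective_iff_map_eq_zero]
    intro x hx
    obtain ⟨m, d, hd, hm, t, rfl⟩ := pot_surj 𝒜 R' S x
    have h0 := hφ m d hd hm t
    rw [hx, HomogeneousLocalization.val_zero, eq_comm, Localization.mk_eq_mk',
      IsLocalization.mk'_eq_zero_iff] at h0
    obtain ⟨⟨s', hs'⟩, h0⟩ := h0
    have hs2 := hs'
    rw [hS'] at hs2
    obtain ⟨s, hs, rfl⟩ := hs2
    obtain ⟨k, hk⟩ := hS s hs
    have h1 : LinearMap.rTensor R' (𝒜 (k + m)).subtype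
        (LinearMap.rTensor R' (potMul 𝒜 m k s hk) t) =
        (s ⊗ₜ[R] (1 : R')) * LinearMap.rTensor R' (𝒜 m).subtype t := by
      clear h0 hx
      induction t with
      | zero => simp
      | tmul a r => simp [potMul]
      | add x y hx hy => simp only [map_add, mul_add, hx, hy]
    have h2 : LinearMap.rTensor R' (potMul 𝒜 m k s hk) t = 0 := by
      apply pot_inj 𝒜 R' (k + m)
      rw [h1, map_zero]
      exact h0
    rw [← potDiv_mul 𝒜 S m d hd hm k s hs hk, LinearMap.rTensor_comp, LinearMap.comp_apply, h2,
      map_zero]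
  · intro y
    obtain ⟨⟨m, n, ⟨e, he⟩, hd⟩, rfl⟩ := HomogeneousLocalization.mk_surjective y
    by_cases h0 : e = 0
    · have := HomogeneousLocalization.subsingleton ℬ (x := S') (h0 ▸ hd)
      exact ⟨0, Subsingleton.elim _ _⟩
    have hd2 := hd
    simp only [hS'] at hd2
    obtain ⟨d, hdS, rfl⟩ := hd2
    obtain ⟨k, hk⟩ := hS d hdS
    obtain rfl : k = m := DirectSum.degree_eq_of_mem_mem ℬ (hBmem hk) he h0
    obtain ⟨t, ht⟩ := hrange k n n.2
    refine ⟨LinearMap.rTensor R' (potDiv 𝒜 S k d hdS hk) t, ?_⟩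
    apply HomogeneousLocalization.val_injective
    refine (hφ k d hdS hk t).trans ?_
    rw [ht]
    rfl
end
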